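/- Let κ, μ be complex numbers with Re(μ + κ + 1/2) > 0, Re(μ − κ + 1/2) > 0, and Re(μ) > 0, and let z > 0. Then √z · ∫₀¹ ξ^{(−κ+1/2)/2 − 1} (1−ξ)^{(κ+1/2)/2 − 1} e^{(ξ−1/2)z} J_μ(√(ξ(1−ξ)) · z) dξ = (2^μ · Γ((μ−κ+1/2)/2) · Γ((μ+κ+1/2)/2) / (√π · Γ(2μ+1))) · z^{μ+1/2} · e^{−z/2} · Σ_{n=0}^∞ ((( (μ−κ+1/2)/2 )_n · ( (μ+κ+1/2)/2 )_n · (μ+1/2)_n) / ((μ+1/2)_{2n} · (2μ+1)_{2n} · n!)) · (−z²)^n · M((μ−κ+1/2)/2 + n; μ + 1/2 + 2n; z). -/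

import Mathlib

open scoped Real

/-- Pochhammer symbol `(x)_n = x (x+1) ⋯ (x+n-1)`. -/
noncomputable def poch (x : ℂ) (n : ℕ) : ℂ := ∏ k ∈ Finset.range n, (x + k)

/-- Bessel function of the first kind `J_ν(z)` of complex order. -/
noncomputable def besselJ (ν z : ℂ) : ℂ :=
  ∑' n : ℕ, ((-1 : ℂ) ^ n / (Complex.Gamma (ν + n + 1) * n.factorial)) * (z / 2) ^ (ν + 2 * n)

/-- Kummer's confluent hypergeometric function `M(a; b; z)`. -/
noncomputable def kummerM (a b z : ℂ) : ℂ :=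
  ∑' n : ℕ, poch a n / (poch b n * n.factorial) * z ^ n

/-!
Up to the factor `(w / 2) ^ μ`, the Bessel function `J_μ(w)` is a regularized `₀F₁` in
`-(w / 2) ^ 2`. At `w = √(ξ (1 - ξ)) z` that factor raises both exponents of the Beta weight by
`μ / 2`, and integrating the power series of `₀F₁` term by term leaves the integrals
`∫ ξ ^ (a + n - 1) (1 - ξ) ^ (b + n - 1) exp (ξ z)` with `a + b = μ + 1 / 2`, which are Euler's
integrals for Kummer's function. Legendre duplication trades the resulting `Γ(μ + 1)` and
`(μ + 1)_n` for `Γ(2μ + 1)` and `(2μ + 1)_{2n}`.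
-/

open Complex MeasureTheory Set

lemma ne_neg_natCast_of_re_pos {x : ℂ} (hx : 0 < x.re) (n : ℕ) : x ≠ -n := by
  rintro rfl
  exact hx.not_ge (by simp)

lemma poch_eq_eval_ascPochhammer (x : ℂ) (n : ℕ) : poch x n = (ascPochhammer ℂ n).eval x := by
  induction n with
  | zero => simp [poch]
  | succ n ih => rw [ascPochhammer_succ_eval, ← ih, poch, Finset.prod_range_succ, poch]

lemma poch_ne_zero {x : ℂ} (hx : ∀ k : ℕ, x ≠ -k) (n : ℕ) : poch x n ≠ 0 :=
  Finset.prod_ne_zero_iff.2 fun k _ h => hx k (eq_neg_of_add_eq_zero_left h)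

lemma Gamma_add_natCast {x : ℂ} (hx : ∀ k : ℕ, x ≠ -k) (n : ℕ) :
    Gamma (x + n) = poch x n * Gamma x := by
  rw [poch_eq_eval_ascPochhammer, ← Gamma_add_nat_div_Gamma_eq x hx,
    div_mul_cancel₀ _ (Gamma_ne_zero hx)]

lemma poch_two_mul (x : ℂ) (n : ℕ) :
    poch (2 * x) (2 * n) = 4 ^ n * poch x n * poch (x + 1 / 2) n := by
  induction n with
  | zero => simp [poch]
  | succ n ih =>
    simp only [poch] at ih ⊢
    rw [mul_add_one, Finset.prod_range_succ, Finset.prod_range_succ, ih,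
      Finset.prod_range_succ, Finset.prod_range_succ]
    push_cast
    ring

lemma betaIntegral_add_natCast_add_natCast {u v : ℂ} (hu : 0 < u.re) (hv : 0 < v.re) (m n : ℕ) :
    betaIntegral (u + m) (v + n) =
      poch u m * poch v n / poch (u + v) (m + n) * betaIntegral u v := by
  have huv : 0 < (u + v).re := add_pos hu hv
  have hum : 0 < (u + m).re := by simpa using add_pos_of_pos_of_nonneg hu m.cast_nonneg
  have hvn : 0 < (v + n).re := by simpa using add_pos_of_pos_of_nonneg hv n.cast_nonneg
  have hsum : u + m + (v + n) = u + v + (m + n : ℕ) := by push_cast; ring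
  rw [betaIntegral_eq_Gamma_mul_div _ _ hum hvn, betaIntegral_eq_Gamma_mul_div _ _ hu hv, hsum,
    Gamma_add_natCast (ne_neg_natCast_of_re_pos hu),
    Gamma_add_natCast (ne_neg_natCast_of_re_pos hv),
    Gamma_add_natCast (ne_neg_natCast_of_re_pos huv)]
  ring

/-- The integrand `x ^ (u - 1) * (1 - x) ^ (v - 1)` of Euler's Beta integral, used as the weight of
all integrals over `[0, 1]`. It is written exactly as in `Complex.betaIntegral`, so that its
integral is definitionally that function. -/
noncomputable def betaKernel (u v : ℂ) (x : ℝ) : ℂ :=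
  (x : ℂ) ^ (u - 1) * (1 - (x : ℂ)) ^ (v - 1)

lemma integral_betaKernel (u v : ℂ) : ∫ x in (0 : ℝ)..1, betaKernel u v x = betaIntegral u v := rfl

lemma intervalIntegrable_betaKernel {u v : ℂ} (hu : 0 < u.re) (hv : 0 < v.re) :
    IntervalIntegrable (betaKernel u v) volume 0 1 :=
  betaIntegral_convergent hu hv

lemma betaKernel_add_add (u v s t : ℂ) {x : ℝ} (hx : x ∈ Ioo (0 : ℝ) 1) :
    betaKernel (u + s) (v + t) x = betaKernel u v x * ((x : ℂ) ^ s * (1 - (x : ℂ)) ^ t) := by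
  have hx₀ : (x : ℂ) ≠ 0 := ofReal_ne_zero.2 hx.1.ne'
  have hx₁ : 1 - (x : ℂ) ≠ 0 := by exact_mod_cast (sub_pos.2 hx.2).ne'
  rw [betaKernel, betaKernel, add_sub_right_comm, add_sub_right_comm, cpow_add _ _ hx₀,
    cpow_add _ _ hx₁]
  ring

lemma betaKernel_add_natCast_add_natCast (u v : ℂ) (m n : ℕ) {x : ℝ} (hx : x ∈ Ioo (0 : ℝ) 1) :
    betaKernel (u + m) (v + n) x = betaKernel u v x * ((x : ℂ) ^ m * (1 - (x : ℂ)) ^ n) := by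
  rw [betaKernel_add_add u v m n hx, cpow_natCast, cpow_natCast]

lemma integral_mul_sum_eq_tsum {α 𝕜 : Type*} [MeasurableSpace α] {ρ : Measure α} [RCLike 𝕜]
    (p : FormalMultilinearSeries 𝕜 𝕜 𝕜) {w : 𝕜} (hw : ‖w‖ₑ < p.radius) {f g : α → 𝕜}
    (hf : Integrable f ρ) (hg : AEStronglyMeasurable g ρ) (hg₁ : ∀ᵐ x ∂ρ, ‖g x‖ ≤ 1) :
    ∫ x, f x * p.sum (w * g x) ∂ρ = ∑' n, p.coeff n * w ^ n * ∫ x, f x * g x ^ n ∂ρ := by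
  have hg_pow (n : ℕ) : ∀ᵐ x ∂ρ, ‖g x ^ n‖ ≤ 1 := hg₁.mono fun x hx => by
    simpa using pow_le_one₀ (norm_nonneg _) hx
  have hfg (n : ℕ) : Integrable (fun x => f x * g x ^ n) ρ := hf.mul_bdd (hg.pow n) (hg_pow n)
  have hcoeff : Summable fun n => ‖p.coeff n * w ^ n‖ := by
    simpa using p.summable_norm_mul_pow (r := ‖w‖₊) hw
  have hsum : Summable fun n => ∫ x, ‖p.coeff n * w ^ n * (f x * g x ^ n)‖ ∂ρ := by
    refine (hcoeff.mul_right (∫ x, ‖f x‖ ∂ρ)).of_nonneg_of_le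
      (fun n => integral_nonneg fun x => norm_nonneg _) fun n => ?_
    simp only [norm_mul (p.coeff n * w ^ n), integral_const_mul]
    refine mul_le_mul_of_nonneg_left (integral_mono_ae (hfg n).norm hf.norm ?_) (norm_nonneg _)
    filter_upwards [hg_pow n] with x hx
    rw [norm_mul]
    exact mul_le_of_le_one_right (norm_nonneg _) hx
  calc ∫ x, f x * p.sum (w * g x) ∂ρ
      = ∫ x, ∑' n, p.coeff n * w ^ n * (f x * g x ^ n) ∂ρ := by
        refine integral_congr_ae (Filter.Eventually.of_forall fun x => ?_)
        simp only [FormalMultilinearSeries.sum, ← tsum_mul_left]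
        refine tsum_congr fun n => ?_
        rw [p.apply_eq_pow_smul_coeff, smul_eq_mul]
        ring
    _ = ∑' n, p.coeff n * w ^ n * ∫ x, f x * g x ^ n ∂ρ := by
        rw [← integral_tsum_of_summable_integral_norm (fun n => (hfg n).const_mul _) hsum]
        simp only [integral_const_mul]

lemma intervalIntegral_mul_sum_eq_tsum {𝕜 : Type*} [RCLike 𝕜] {ρ : Measure ℝ} {a b : ℝ}
    (p : FormalMultilinearSeries 𝕜 𝕜 𝕜) {w : 𝕜} (hw : ‖w‖ₑ < p.radius) {f g : ℝ → 𝕜}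
    (hf : IntervalIntegrable f ρ a b) (hg : ContinuousOn g (uIcc a b))
    (hg₁ : ∀ x ∈ uIoc a b, ‖g x‖ ≤ 1) :
    ∫ x in a..b, f x * p.sum (w * g x) ∂ρ =
      ∑' n, p.coeff n * w ^ n * ∫ x in a..b, f x * g x ^ n ∂ρ := by
  have hg_meas : AEStronglyMeasurable g (ρ.restrict (uIoc a b)) :=
    (hg.mono uIoc_subset_uIcc).aestronglyMeasurable measurableSet_uIoc
  simp only [intervalIntegral.intervalIntegral_eq_integral_uIoc]
  rw [integral_mul_sum_eq_tsum p hw hf.def' hg_meas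
    (ae_restrict_of_forall_mem measurableSet_uIoc hg₁), ← tsum_const_smul'']
  simp only [mul_smul_comm]

lemma integral_betaKernel_mul_exp {u v : ℂ} (hu : 0 < u.re) (hv : 0 < v.re) (z : ℂ) :
    ∫ x in (0 : ℝ)..1, betaKernel u v x * exp (x * z) =
      betaIntegral u v * kummerM u (u + v) z := by
  have hradius : ‖z‖ₑ < (regularizedHGFunSeries 0 0).radius := by
    rw [radius_regularizedHGFunSeries_eq_top le_rfl]
    exact enorm_lt_top
  have hmoment (n : ℕ) : ∫ x in (0 : ℝ)..1, betaKernel u v x * (x : ℂ) ^ n =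
      poch u n / poch (u + v) n * betaIntegral u v := calc
    _ = ∫ x in (0 : ℝ)..1, betaKernel (u + n) (v + (0 : ℕ)) x :=
      intervalIntegral.integral_congr_Ioo_of_le zero_le_one fun x hx => by
        simp only [betaKernel_add_natCast_add_natCast u v n 0 hx, pow_zero, mul_one]
    _ = poch u n / poch (u + v) n * betaIntegral u v := by
      rw [integral_betaKernel, betaIntegral_add_natCast_add_natCast hu hv]
      simp [poch]
  calc ∫ x in (0 : ℝ)..1, betaKernel u v x * exp (x * z)
      = ∫ x in (0 : ℝ)..1, betaKernel u v x * (regularizedHGFunSeries 0 0).sum (z * x) := by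
        simp only [← regularizedHGFun_zero_zero, regularizedHGFun, mul_comm z]
    _ = ∑' n, regularizedHGFunCoeff 0 0 n * z ^ n *
          ∫ x in (0 : ℝ)..1, betaKernel u v x * (x : ℂ) ^ n := by
        rw [intervalIntegral_mul_sum_eq_tsum _ hradius (intervalIntegrable_betaKernel hu hv)
          (by fun_prop), regularizedHGFunSeries_coeff]
        intro x hx
        rw [uIoc_of_le zero_le_one] at hx
        rw [norm_real, Real.norm_of_nonneg hx.1.le]
        exact hx.2
    _ = betaIntegral u v * kummerM u (u + v) z := by
        rw [kummerM, ← tsum_mul_left]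
        refine tsum_congr fun n => ?_
        simp only [hmoment, regularizedHGFunCoeff, Multiset.map_zero, Multiset.prod_zero]
        ring

lemma integral_betaKernel_mul_exp_mul_sum {a b : ℂ} (ha : 0 < a.re) (hb : 0 < b.re)
    (p : FormalMultilinearSeries ℂ ℂ ℂ) {w : ℂ} (hw : ‖w‖ₑ < p.radius) (z : ℂ) :
    ∫ x in (0 : ℝ)..1, betaKernel a b x * exp (x * z) * p.sum (w * (x * (1 - x))) =
      betaIntegral a b * ∑' n : ℕ, poch a n * poch b n / poch (a + b) (2 * n) * p.coeff n * w ^ n *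
        kummerM (a + n) (a + b + 2 * n) z := by
  have hmoment (n : ℕ) :
      ∫ x in (0 : ℝ)..1, betaKernel a b x * exp (x * z) * ((x : ℂ) * (1 - x)) ^ n =
        poch a n * poch b n / poch (a + b) (2 * n) * betaIntegral a b *
          kummerM (a + n) (a + b + 2 * n) z := by
    have han : 0 < (a + n).re := by simpa using add_pos_of_pos_of_nonneg ha n.cast_nonneg
    have hbn : 0 < (b + n).re := by simpa using add_pos_of_pos_of_nonneg hb n.cast_nonneg
    calc _ = ∫ x in (0 : ℝ)..1, betaKernel (a + n) (b + n) x * exp (x * z) :=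
          intervalIntegral.integral_congr_Ioo_of_le zero_le_one fun x hx => by
            simp only [betaKernel_add_natCast_add_natCast a b n n hx, mul_pow]
            ring
      _ = _ := by
          rw [integral_betaKernel_mul_exp han hbn, betaIntegral_add_natCast_add_natCast ha hb,
            ← two_mul, add_add_add_comm, ← two_mul]
  have hkernel :
      IntervalIntegrable (fun x : ℝ => betaKernel a b x * exp (x * z)) volume 0 1 :=
    (intervalIntegrable_betaKernel ha hb).mul_continuousOn (by fun_prop)
  have hbound : ∀ x ∈ uIoc (0 : ℝ) 1, ‖(x : ℂ) * (1 - x)‖ ≤ 1 := fun x hx => by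
    rw [uIoc_of_le zero_le_one] at hx
    have hx₁ : 0 ≤ 1 - x := sub_nonneg.2 hx.2
    rw [← ofReal_one, ← ofReal_sub, norm_mul, norm_real, norm_real, Real.norm_of_nonneg hx.1.le,
      Real.norm_of_nonneg hx₁]
    exact mul_le_one₀ hx.2 hx₁ (sub_le_self 1 hx.1.le)
  rw [intervalIntegral_mul_sum_eq_tsum p hw hkernel (by fun_prop) hbound, ← tsum_mul_left]
  refine tsum_congr fun n => ?_
  rw [hmoment]
  ring

lemma integral_betaKernel_mul_exp_mul_regularizedHGFun {a b c : ℂ} (ha : 0 < a.re) (hb : 0 < b.re)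
    (hc : ∀ k : ℕ, c ≠ -k) (w z : ℂ) :
    ∫ x in (0 : ℝ)..1,
        betaKernel a b x * exp (x * z) * regularizedHGFun 0 {c} (w * (x * (1 - x))) =
      betaIntegral a b / Gamma c * ∑' n : ℕ,
        poch a n * poch b n / (poch (a + b) (2 * n) * poch c n * n.factorial) * w ^ n *
          kummerM (a + n) (a + b + 2 * n) z := by
  have hradius : ‖w‖ₑ < (regularizedHGFunSeries 0 {c}).radius := by
    rw [radius_regularizedHGFunSeries_eq_top (by simp)]
    exact enorm_lt_top
  simp only [regularizedHGFun]
  rw [integral_betaKernel_mul_exp_mul_sum ha hb _ hradius, ← tsum_mul_left, ← tsum_mul_left]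
  refine tsum_congr fun n => ?_
  simp only [regularizedHGFunSeries_coeff, regularizedHGFunCoeff, Multiset.map_zero,
    Multiset.prod_zero, Multiset.map_singleton, Multiset.prod_singleton, Gamma_add_natCast hc]
  ring

lemma besselJ_eq_cpow_mul_regularizedHGFun (ν : ℂ) {z : ℂ} (hz : z ≠ 0) :
    besselJ ν z = (z / 2) ^ ν * regularizedHGFun 0 {ν + 1} (-(z / 2) ^ 2) := by
  have hz₂ : z / 2 ≠ 0 := div_ne_zero hz two_ne_zero
  rw [besselJ, regularizedHGFun, FormalMultilinearSeries.sum, ← tsum_mul_left]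
  refine tsum_congr fun n => ?_
  have hpow : (z / 2) ^ (ν + 2 * n) = (z / 2) ^ ν * ((z / 2) ^ 2) ^ n := by
    rw [cpow_add _ _ hz₂, ← pow_mul, ← cpow_natCast, Nat.cast_mul, Nat.cast_ofNat]
  rw [FormalMultilinearSeries.apply_eq_pow_smul_coeff, regularizedHGFunSeries_coeff, smul_eq_mul,
    neg_pow ((z / 2) ^ 2), hpow, add_right_comm]
  simp only [regularizedHGFunCoeff, Multiset.map_zero, Multiset.prod_zero, Multiset.map_singleton,
    Multiset.prod_singleton]
  ring

lemma ofReal_mul_cpow {r : ℝ} (hr : 0 ≤ r) (z s : ℂ) : (r * z) ^ s = (r : ℂ) ^ s * z ^ s := by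
  rcases eq_or_ne s 0 with rfl | hs
  · simp
  rcases hr.eq_or_lt with rfl | hr
  · simp [hs]
  rcases eq_or_ne z 0 with rfl | hz
  · simp [hs]
  have hr' : (r : ℂ) ≠ 0 := ofReal_ne_zero.2 hr.ne'
  rw [cpow_def_of_ne_zero (mul_ne_zero hr' hz), cpow_def_of_ne_zero hr', cpow_def_of_ne_zero hz,
    log_ofReal_mul hr hz, ofReal_log hr.le, add_mul, exp_add]

lemma ofReal_sqrt_cpow {x : ℝ} (hx : 0 ≤ x) (s : ℂ) : (√x : ℂ) ^ s = (x : ℂ) ^ (s / 2) := by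
  have him : (log (x : ℂ) * (1 / 2 : ℝ)).im = 0 := by simp [log_im, arg_ofReal_of_nonneg hx]
  rw [Real.sqrt_eq_rpow, ofReal_cpow hx, ← cpow_mul _ (him ▸ neg_neg_of_pos Real.pi_pos)
    (him ▸ Real.pi_nonneg)]
  congr 1
  push_cast
  ring

lemma besselJ_sqrt_mul (ν : ℂ) {x : ℝ} (hx : x ∈ Ioo (0 : ℝ) 1) {z : ℂ} (hz : z ≠ 0) :
    besselJ ν (√(x * (1 - x)) * z) =
      (z / 2) ^ ν * ((x : ℂ) ^ (ν / 2) * (1 - (x : ℂ)) ^ (ν / 2)) *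
        regularizedHGFun 0 {ν + 1} (-(z / 2) ^ 2 * (x * (1 - x))) := by
  have hx₁ : 0 < 1 - x := sub_pos.2 hx.2
  have hprod : 0 < x * (1 - x) := mul_pos hx.1 hx₁
  have hsqrt : (√(x * (1 - x)) : ℂ) ≠ 0 := ofReal_ne_zero.2 (Real.sqrt_pos.2 hprod).ne'
  have hsq : (√(x * (1 - x)) : ℂ) ^ 2 = x * (1 - x) := by
    rw [← ofReal_pow, Real.sq_sqrt hprod.le]
    push_cast
    rfl
  have hcpow : (√(x * (1 - x)) : ℂ) ^ ν = (x : ℂ) ^ (ν / 2) * (1 - (x : ℂ)) ^ (ν / 2) := by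
    rw [ofReal_sqrt_cpow hprod.le, ofReal_mul, mul_cpow_ofReal_nonneg hx.1.le hx₁.le, ofReal_sub,
      ofReal_one]
  rw [besselJ_eq_cpow_mul_regularizedHGFun ν (mul_ne_zero hsqrt hz), mul_div_assoc,
    ofReal_mul_cpow (Real.sqrt_nonneg _), mul_pow, hsq, hcpow, ← mul_neg, mul_comm (_ * (1 - _))]
  ring

lemma betaIntegral_div_Gamma_add_one {a b μ : ℂ} (ha : 0 < a.re) (hb : 0 < b.re)
    (hab : a + b = μ + 1 / 2) :
    betaIntegral a b / Gamma (μ + 1) =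
      2 ^ (2 * μ) * Gamma a * Gamma b / (√π * Gamma (2 * μ + 1)) := by
  have hduplication : Gamma (μ + 1 / 2) * Gamma (μ + 1) =
      Gamma (2 * μ + 1) * 2 ^ (-(2 * μ)) * √π := by
    have h_add : μ + 1 / 2 + 1 / 2 = μ + 1 := by ring
    have h_two_mul : 2 * (μ + 1 / 2) = 2 * μ + 1 := by ring
    have h_sub : 1 - (2 * μ + 1) = -(2 * μ) := by ring
    simpa only [h_add, h_two_mul, h_sub] using Gamma_mul_Gamma_add_half (μ + 1 / 2)
  rw [betaIntegral_eq_Gamma_mul_div _ _ ha hb, hab, div_div, hduplication, cpow_neg]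
  simp only [div_eq_mul_inv, mul_inv, inv_inv]
  ring

lemma two_cpow_mul_div_two_cpow (z s : ℂ) : 2 ^ s * (z / 2) ^ s = z ^ s := by
  rw [← ofReal_ofNat, ← ofReal_mul_cpow zero_le_two, ofReal_ofNat, mul_div_cancel₀ _ two_ne_zero]

lemma integral_betaKernel_mul_exp_mul_besselJ {s t ν : ℂ} (hs : 0 < (s + ν / 2).re)
    (ht : 0 < (t + ν / 2).re) (hν : ∀ k : ℕ, ν + 1 ≠ -k) {z : ℂ} (hz : z ≠ 0) (y : ℂ) :
    ∫ x in (0 : ℝ)..1, betaKernel s t x * exp (x * y) * besselJ ν (√(x * (1 - x)) * z) =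
      (z / 2) ^ ν * (betaIntegral (s + ν / 2) (t + ν / 2) / Gamma (ν + 1)) * ∑' n : ℕ,
        poch (s + ν / 2) n * poch (t + ν / 2) n /
            (poch (s + t + ν) (2 * n) * poch (ν + 1) n * n.factorial) *
          (-(z / 2) ^ 2) ^ n * kummerM (s + ν / 2 + n) (s + t + ν + 2 * n) y := by
  have hsum : s + ν / 2 + (t + ν / 2) = s + t + ν := by ring
  calc _ = ∫ x in (0 : ℝ)..1, (z / 2) ^ ν * (betaKernel (s + ν / 2) (t + ν / 2) x * exp (x * y) *
          regularizedHGFun 0 {ν + 1} (-(z / 2) ^ 2 * (x * (1 - x)))) :=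
        intervalIntegral.integral_congr_Ioo_of_le zero_le_one fun x hx => by
          simp only [besselJ_sqrt_mul ν hx hz, betaKernel_add_add s t _ _ hx]
          ring
    _ = _ := by
        rw [intervalIntegral.integral_const_mul,
          integral_betaKernel_mul_exp_mul_regularizedHGFun hs ht hν, hsum, mul_assoc]

lemma neg_half_sq_pow_div_poch_add_one {μ : ℂ} {n : ℕ} (hμ : poch (μ + 1 / 2) n ≠ 0) (z : ℂ) :
    (-(z / 2) ^ 2) ^ n / poch (μ + 1) n =
      poch (μ + 1 / 2) n / poch (2 * μ + 1) (2 * n) * (-z ^ 2) ^ n := by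
  have hduplication :
      poch (2 * μ + 1) (2 * n) = 4 ^ n * poch (μ + 1 / 2) n * poch (μ + 1) n := by
    have h_two_mul : 2 * (μ + 1 / 2) = 2 * μ + 1 := by ring
    have h_add : μ + 1 / 2 + 1 / 2 = μ + 1 := by ring
    simpa only [h_two_mul, h_add] using poch_two_mul (μ + 1 / 2) n
  have hsq : -z ^ 2 = 4 * -(z / 2) ^ 2 := by ring
  rw [hduplication, hsq, mul_pow]
  generalize poch (μ + 1 / 2) n = p at hμ ⊢
  field_simp

lemma integral_betaKernel_mul_exp_mul_besselJ_of_add_eq_half {s t μ : ℂ} (hst : s + t = 1 / 2)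
    (hs : 0 < (s + μ / 2).re) (ht : 0 < (t + μ / 2).re) {z : ℂ} (hz : z ≠ 0) (y : ℂ) :
    ∫ x in (0 : ℝ)..1, betaKernel s t x * exp (x * y) * besselJ μ (√(x * (1 - x)) * z) =
      2 ^ μ * Gamma (s + μ / 2) * Gamma (t + μ / 2) / (√π * Gamma (2 * μ + 1)) *
        (z ^ μ * ∑' n : ℕ,
          poch (s + μ / 2) n * poch (t + μ / 2) n * poch (μ + 1 / 2) n /
              (poch (μ + 1 / 2) (2 * n) * poch (2 * μ + 1) (2 * n) * n.factorial) *
            (-z ^ 2) ^ n * kummerM (s + μ / 2 + n) (μ + 1 / 2 + 2 * n) y) := by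
  have hadd : s + μ / 2 + (t + μ / 2) = μ + 1 / 2 := by linear_combination hst
  have hμ : 0 < (μ + 1 / 2).re := hadd ▸ add_pos hs ht
  have hμ₁ : 0 < (μ + 1).re := by
    norm_num at hμ ⊢
    linarith
  have htwo : (2 : ℂ) ^ (2 * μ) = 2 ^ μ * 2 ^ μ := by rw [two_mul, cpow_add _ _ two_ne_zero]
  have hterm (n : ℕ) :
      poch (s + μ / 2) n * poch (t + μ / 2) n /
          (poch (μ + 1 / 2) (2 * n) * poch (μ + 1) n * n.factorial) * (-(z / 2) ^ 2) ^ n =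
        poch (s + μ / 2) n * poch (t + μ / 2) n * poch (μ + 1 / 2) n /
          (poch (μ + 1 / 2) (2 * n) * poch (2 * μ + 1) (2 * n) * n.factorial) * (-z ^ 2) ^ n := by
    linear_combination poch (s + μ / 2) n * poch (t + μ / 2) n /
      (poch (μ + 1 / 2) (2 * n) * n.factorial) *
      neg_half_sq_pow_div_poch_add_one (poch_ne_zero (ne_neg_natCast_of_re_pos hμ) n) z
  rw [integral_betaKernel_mul_exp_mul_besselJ hs ht (ne_neg_natCast_of_re_pos hμ₁) hz, hst,
    add_comm (1 / 2) μ, betaIntegral_div_Gamma_add_one hs ht hadd,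
    ← two_cpow_mul_div_two_cpow z μ, htwo]
  simp only [hterm]
  ring

theorem whittaker_integral_eq_kummer_sum_general (κ μ : ℂ) {z : ℂ} (hz : z ≠ 0)
    (h₁ : 0 < (μ + κ + 1 / 2).re) (h₂ : 0 < (μ - κ + 1 / 2).re) :
    z ^ (1 / 2 : ℂ) *
        ∫ ξ in (0 : ℝ)..1,
          (ξ : ℂ) ^ ((-κ + 1 / 2) / 2 - 1) * (1 - (ξ : ℂ)) ^ ((κ + 1 / 2) / 2 - 1) *
            exp ((ξ - 1 / 2) * z) * besselJ μ (√(ξ * (1 - ξ)) * z) =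
      2 ^ μ * Gamma ((μ - κ + 1 / 2) / 2) * Gamma ((μ + κ + 1 / 2) / 2) /
          (√π * Gamma (2 * μ + 1)) *
        (z ^ (μ + 1 / 2) * exp (-z / 2) *
          ∑' n : ℕ,
            poch ((μ - κ + 1 / 2) / 2) n * poch ((μ + κ + 1 / 2) / 2) n * poch (μ + 1 / 2) n /
                (poch (μ + 1 / 2) (2 * n) * poch (2 * μ + 1) (2 * n) * n.factorial) *
              (-z ^ 2) ^ n *
              kummerM ((μ - κ + 1 / 2) / 2 + n) (μ + 1 / 2 + 2 * n) z) := by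
  have hst : (-κ + 1 / 2) / 2 + (κ + 1 / 2) / 2 = 1 / 2 := by ring
  have ha : (-κ + 1 / 2) / 2 + μ / 2 = (μ - κ + 1 / 2) / 2 := by ring
  have hb : (κ + 1 / 2) / 2 + μ / 2 = (μ + κ + 1 / 2) / 2 := by ring
  have ha_pos : 0 < ((-κ + 1 / 2) / 2 + μ / 2).re := by
    rw [ha]
    simpa using h₂
  have hb_pos : 0 < ((κ + 1 / 2) / 2 + μ / 2).re := by
    rw [hb]
    simpa using h₁
  have hexp (ξ : ℝ) : exp ((ξ - 1 / 2) * z) = exp (-z / 2) * exp (ξ * z) := by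
    rw [← exp_add]
    ring_nf
  calc z ^ (1 / 2 : ℂ) * _
      = z ^ (1 / 2 : ℂ) * ∫ ξ in (0 : ℝ)..1, exp (-z / 2) *
          (betaKernel ((-κ + 1 / 2) / 2) ((κ + 1 / 2) / 2) ξ * exp (ξ * z) *
            besselJ μ (√(ξ * (1 - ξ)) * z)) := by
        congr 1
        refine intervalIntegral.integral_congr fun ξ _ => ?_
        simp only [hexp, betaKernel]
        ring
    _ = _ := by
        rw [intervalIntegral.integral_const_mul,
          integral_betaKernel_mul_exp_mul_besselJ_of_add_eq_half hst ha_pos hb_pos hz, ha, hb,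
          cpow_add _ _ hz]
        ring

/-- The Whittaker-type integral expanded as a series of confluent hypergeometric
functions. -/
theorem whittaker_integral_eq_kummer_sum (κ μ : ℂ) (z : ℝ) (hz : 0 < z)
    (h₁ : 0 < (μ + κ + 1 / 2).re) (h₂ : 0 < (μ - κ + 1 / 2).re) (h₃ : 0 < μ.re) :
    (Real.sqrt z : ℂ) *
        ∫ ξ in (0:ℝ)..1,
          (ξ : ℂ) ^ ((-κ + 1 / 2) / 2 - 1) * ((1 : ℂ) - (ξ : ℂ)) ^ ((κ + 1 / 2) / 2 - 1) *
            Complex.exp (((ξ : ℂ) - 1 / 2) * z) *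
            besselJ μ ((Real.sqrt (ξ * (1 - ξ)) : ℂ) * z) =
      (2 : ℂ) ^ μ * Complex.Gamma ((μ - κ + 1 / 2) / 2) * Complex.Gamma ((μ + κ + 1 / 2) / 2) /
          (Real.sqrt π * Complex.Gamma (2 * μ + 1)) *
        ((z : ℂ) ^ (μ + 1 / 2) * Complex.exp (-(z : ℂ) / 2) *
          ∑' n : ℕ,
            poch ((μ - κ + 1 / 2) / 2) n * poch ((μ + κ + 1 / 2) / 2) n * poch (μ + 1 / 2) n /
                (poch (μ + 1 / 2) (2 * n) * poch (2 * μ + 1) (2 * n) * n.factorial) *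
              (-(z : ℂ) ^ 2) ^ n *
              kummerM ((μ - κ + 1 / 2) / 2 + n) (μ + 1 / 2 + 2 * n) z) := by
  rw [← cpow_one (√z : ℂ), ofReal_sqrt_cpow hz.le]
  exact whittaker_integral_eq_kummer_sum_general κ μ (ofReal_ne_zero.2 hz.ne') h₁ h₂
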